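/- Let 0 < q < 1 and set U := φ^2(-q)/φ^2(-q^5). Then q f^6(-q) f^6(-q^10) / (f^6(-q^2) f^6(-q^5)) = U(U-1)/(U-5). -/

import Mathlib

open Real

/-- Ramanujan's theta function `φ(q) = ∑_{n=-∞}^∞ q^(n^2)`. -/
noncomputable def phi (q : ℝ) : ℝ := ∑' n : ℤ, q ^ (n ^ 2)

/-- Ramanujan's theta function `ψ(q) = ∑_{n=0}^∞ q^(n(n+1)/2)`. -/
noncomputable def psi (q : ℝ) : ℝ := ∑' n : ℕ, q ^ (n * (n + 1) / 2)

/-- `fneg q` is Ramanujan's `f(-q) = ∑_{n=-∞}^∞ (-1)^n q^(n(3n-1)/2)`. -/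
noncomputable def fneg (q : ℝ) : ℝ := ∑' n : ℤ, (-1 : ℝ) ^ n * q ^ (n * (3 * n - 1) / 2)

open Filter Topology

/-- The infinite `q`-Pochhammer symbol `(a; Q)_∞ = ∏_{k ≥ 0} (1 - a Q ^ k)`. -/
noncomputable def qPoch (a Q : ℝ) : ℝ := ∏' k : ℕ, (1 - a * Q ^ k)

/-- The bilateral theta series `∑_{n ∈ ℤ} z ^ n s ^ (n ^ 2)`. -/
noncomputable def thetaSeries (z s : ℝ) : ℝ := ∑' n : ℤ, z ^ n * s ^ (n ^ 2)

/-- The reciprocal `1 / (Q; Q)_m` of the finite `q`-Pochhammer symbol, zero for `m < 0`. -/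
noncomputable def recipPoch (Q : ℝ) (m : ℤ) : ℝ :=
  if m < 0 then 0 else (∏ k ∈ Finset.range m.toNat, (1 - Q * Q ^ k))⁻¹

section Pochhammer

lemma tendsto_qPoch (a : ℝ) {Q : ℝ} (hQ0 : 0 ≤ Q) (hQ1 : Q < 1) :
    Tendsto (fun N => ∏ k ∈ Finset.range N, (1 - a * Q ^ k)) atTop (𝓝 (qPoch a Q)) := by
  have hs : Summable fun k : ℕ => ‖-(a * Q ^ k)‖ :=
    ((summable_geometric_of_lt_one hQ0 hQ1).mul_left a).neg.norm
  have hm := multipliable_one_add_of_summable hs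
  simpa only [qPoch, sub_eq_add_neg] using hm.hasProd.tendsto_prod_nat

lemma one_sub_mul_pow_pos {Q : ℝ} (hQ0 : 0 ≤ Q) (hQ1 : Q < 1) (k : ℕ) : 0 < 1 - Q * Q ^ k := by
  rw [← pow_succ', sub_pos]
  exact pow_lt_one₀ hQ0 hQ1 (Nat.succ_ne_zero k)

lemma prod_one_sub_pos {Q : ℝ} (hQ0 : 0 ≤ Q) (hQ1 : Q < 1) (N : ℕ) :
    0 < ∏ k ∈ Finset.range N, (1 - Q * Q ^ k) :=
  Finset.prod_pos fun k _ => one_sub_mul_pow_pos hQ0 hQ1 k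

lemma antitone_prod_one_sub {Q : ℝ} (hQ0 : 0 ≤ Q) (hQ1 : Q < 1) :
    Antitone fun N => ∏ k ∈ Finset.range N, (1 - Q * Q ^ k) := by
  refine antitone_nat_of_succ_le fun N => ?_
  rw [Finset.prod_range_succ]
  refine mul_le_of_le_one_right (prod_one_sub_pos hQ0 hQ1 N).le ?_
  have : 0 ≤ Q * Q ^ N := by positivity
  linarith

lemma qPoch_self_pos {Q : ℝ} (hQ0 : 0 ≤ Q) (hQ1 : Q < 1) : 0 < qPoch Q Q := by
  have hne : qPoch Q Q ≠ 0 := by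
    have := tprod_one_add_ne_zero_of_summable (f := fun k : ℕ => -(Q * Q ^ k))
      (fun k => by
        have := one_sub_mul_pow_pos hQ0 hQ1 k
        rw [← sub_eq_add_neg]; exact this.ne')
      ((summable_geometric_of_lt_one hQ0 hQ1).mul_left Q).neg.norm
    simpa only [qPoch, sub_eq_add_neg] using this
  refine lt_of_le_of_ne ?_ hne.symm
  exact ge_of_tendsto' (tendsto_qPoch Q hQ0 hQ1) fun N => (prod_one_sub_pos hQ0 hQ1 N).le

lemma qPoch_self_le {Q : ℝ} (hQ0 : 0 ≤ Q) (hQ1 : Q < 1) (N : ℕ) :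
    qPoch Q Q ≤ ∏ k ∈ Finset.range N, (1 - Q * Q ^ k) :=
  (antitone_prod_one_sub hQ0 hQ1).le_of_tendsto (tendsto_qPoch Q hQ0 hQ1) N

lemma qPoch_dissection (a : ℝ) {Q : ℝ} (hQ0 : 0 ≤ Q) (hQ1 : Q < 1) {m : ℕ} (hm : m ≠ 0) :
    qPoch a Q = ∏ r ∈ Finset.range m, qPoch (a * Q ^ r) (Q ^ m) := by
  have hfin : ∀ N : ℕ, ∏ k ∈ Finset.range (m * N), (1 - a * Q ^ k) =
      ∏ r ∈ Finset.range m, ∏ k ∈ Finset.range N, (1 - a * Q ^ r * (Q ^ m) ^ k) := by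
    intro N
    induction N with
    | zero => simp
    | succ N ih =>
      rw [mul_add, mul_one, Finset.prod_range_add, ih, ← Finset.prod_mul_distrib]
      refine Finset.prod_congr rfl fun r _ => ?_
      rw [Finset.prod_range_succ, ← pow_mul, mul_assoc a, ← pow_add, add_comm r]
  have hQm : Q ^ m < 1 := pow_lt_one₀ hQ0 hQ1 hm
  have h1 : Tendsto (fun N : ℕ => m * N) atTop atTop :=
    tendsto_id.const_mul_atTop' (Nat.pos_of_ne_zero hm)
  refine tendsto_nhds_unique ((tendsto_qPoch a hQ0 hQ1).comp h1) ?_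
  simp only [Function.comp_def, hfin]
  exact tendsto_finsetProd _ fun r _ => tendsto_qPoch _ (pow_nonneg hQ0 m) hQm

lemma qPoch_mul_qPoch_neg (a : ℝ) {Q : ℝ} (hQ0 : 0 ≤ Q) (hQ1 : Q < 1) :
    qPoch a Q * qPoch (-a) Q = qPoch (a ^ 2) (Q ^ 2) := by
  refine tendsto_nhds_unique ((tendsto_qPoch a hQ0 hQ1).mul (tendsto_qPoch (-a) hQ0 hQ1)) ?_
  refine (tendsto_qPoch (a ^ 2) (sq_nonneg Q) (pow_lt_one₀ hQ0 hQ1 two_ne_zero)).congr fun N => ?_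
  rw [← Finset.prod_mul_distrib]
  exact Finset.prod_congr rfl fun k _ => by ring

lemma qPoch_eq_mul_shift (a : ℝ) {Q : ℝ} (hQ0 : 0 ≤ Q) (hQ1 : Q < 1) :
    qPoch a Q = (1 - a) * qPoch (a * Q) Q := by
  refine tendsto_nhds_unique ((tendsto_add_atTop_iff_nat 1).2 (tendsto_qPoch a hQ0 hQ1)) ?_
  refine ((tendsto_qPoch (a * Q) hQ0 hQ1).const_mul (1 - a)).congr fun N => ?_
  rw [Finset.prod_range_succ', mul_comm, pow_zero, mul_one]
  congr 1
  exact Finset.prod_congr rfl fun k _ => by ring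

end Pochhammer

section TripleProduct

lemma recipPoch_natCast (Q : ℝ) (m : ℕ) :
    recipPoch Q m = (∏ k ∈ Finset.range m, (1 - Q * Q ^ k))⁻¹ := by
  simp [recipPoch]

lemma recipPoch_sub_one {Q : ℝ} (hQ0 : 0 < Q) (hQ1 : Q < 1) (m : ℤ) :
    recipPoch Q (m - 1) = (1 - Q ^ m) * recipPoch Q m := by
  rcases lt_trichotomy m 0 with h | rfl | h
  · rw [recipPoch, recipPoch, if_pos (by omega), if_pos h, mul_zero]
  · simp [recipPoch]
  · obtain ⟨k, rfl⟩ : ∃ k : ℕ, m = k + 1 := ⟨(m - 1).toNat, by omega⟩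
    have h1 := one_sub_mul_pow_pos hQ0.le hQ1 k
    have h2 := prod_one_sub_pos hQ0.le hQ1 k
    have h3 : Q ^ ((k : ℤ) + 1) = Q * Q ^ k := by
      rw [zpow_add_one₀ hQ0.ne', zpow_natCast, mul_comm]
    rw [add_sub_cancel_right, recipPoch_natCast, h3, ← Nat.cast_succ, recipPoch_natCast,
      Finset.prod_range_succ]
    field_simp

lemma recipPoch_nonneg {Q : ℝ} (hQ0 : 0 ≤ Q) (hQ1 : Q < 1) (m : ℤ) : 0 ≤ recipPoch Q m := by
  unfold recipPoch
  split_ifs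
  · exact le_rfl
  · exact (inv_pos.2 (prod_one_sub_pos hQ0 hQ1 _)).le

lemma recipPoch_le {Q : ℝ} (hQ0 : 0 ≤ Q) (hQ1 : Q < 1) (m : ℤ) :
    recipPoch Q m ≤ (qPoch Q Q)⁻¹ := by
  unfold recipPoch
  split_ifs
  · exact (inv_pos.2 (qPoch_self_pos hQ0 hQ1)).le
  · exact inv_anti₀ (qPoch_self_pos hQ0 hQ1) (qPoch_self_le hQ0 hQ1 _)

lemma tendsto_recipPoch {Q : ℝ} (hQ0 : 0 ≤ Q) (hQ1 : Q < 1) :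
    Tendsto (recipPoch Q) atTop (𝓝 (qPoch Q Q)⁻¹) := by
  have h : Tendsto Int.toNat atTop atTop :=
    tendsto_atTop.2 fun b => by
      filter_upwards [eventually_ge_atTop (b : ℤ)] with m hm
      omega
  refine (((tendsto_qPoch Q hQ0 hQ1).inv₀ (qPoch_self_pos hQ0 hQ1).ne').comp h).congr' ?_
  filter_upwards [eventually_ge_atTop (0 : ℤ)] with m hm
  rw [recipPoch, if_neg (not_lt.2 hm)]
  rfl

/-- The finite Jacobi triple product identity. -/
lemma hasSum_finite_triple_product {s z : ℝ} (hs0 : 0 < s) (hs1 : s < 1) (hz : z ≠ 0) (N : ℕ) :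
    HasSum (fun n : ℤ => (∏ k ∈ Finset.range (2 * N), (1 - s ^ 2 * (s ^ 2) ^ k)) *
        recipPoch (s ^ 2) (N + n) * recipPoch (s ^ 2) (N - n) * (z ^ n * s ^ (n ^ 2)))
      (∏ k ∈ Finset.range N, (1 - -(z * s) * (s ^ 2) ^ k) * (1 - -(z⁻¹ * s) * (s ^ 2) ^ k)) := by
  have hQ0 : 0 < s ^ 2 := by positivity
  have hQ1 : s ^ 2 < 1 := pow_lt_one₀ hs0.le hs1 two_ne_zero
  induction N with
  | zero =>
    convert hasSum_single (0 : ℤ) ?_ using 1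
    · simp [recipPoch]
    · intro n hn
      rcases lt_or_gt_of_ne hn with h | h
      · simp [recipPoch, h]
      · simp [recipPoch, h]
  | succ N ih =>
    have e1 := (Equiv.subRight (1 : ℤ)).hasSum_iff.2 ih
    have e2 := (Equiv.addRight (1 : ℤ)).hasSum_iff.2 ih
    have key := ((ih.mul_left (1 + (s ^ N) ^ 4 * s ^ 2)).add
      (e1.mul_left (z * (s * (s ^ N) ^ 2)))).add (e2.mul_left (z⁻¹ * (s * (s ^ N) ^ 2)))
    have hval : ∏ k ∈ Finset.range (N + 1),
        (1 - -(z * s) * (s ^ 2) ^ k) * (1 - -(z⁻¹ * s) * (s ^ 2) ^ k) =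
        (1 + (s ^ N) ^ 4 * s ^ 2) * (∏ k ∈ Finset.range N,
          (1 - -(z * s) * (s ^ 2) ^ k) * (1 - -(z⁻¹ * s) * (s ^ 2) ^ k)) +
        z * (s * (s ^ N) ^ 2) * (∏ k ∈ Finset.range N,
          (1 - -(z * s) * (s ^ 2) ^ k) * (1 - -(z⁻¹ * s) * (s ^ 2) ^ k)) +
        z⁻¹ * (s * (s ^ N) ^ 2) * (∏ k ∈ Finset.range N,
          (1 - -(z * s) * (s ^ 2) ^ k) * (1 - -(z⁻¹ * s) * (s ^ 2) ^ k)) := by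
      rw [Finset.prod_range_succ, ← pow_mul s 2 N, pow_mul' s 2 N]
      generalize s ^ N = w
      field_simp
      ring
    rw [hval]
    refine Eq.mpr (congrArg (HasSum · _) (funext fun n => ?_)) key
    simp only [Function.comp_apply, Equiv.subRight_apply, Equiv.coe_addRight]
    set A := recipPoch (s ^ 2) (N + 1 + n) with hA
    set B := recipPoch (s ^ 2) (N + 1 - n) with hB
    have hN : (s ^ 2) ^ (N : ℤ) = (s ^ N) ^ 2 := by
      rw [zpow_natCast, ← pow_mul, ← pow_mul, mul_comm]
    have hn : (s ^ 2) ^ n = (s ^ n) ^ 2 := by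
      rw [← zpow_natCast, ← zpow_natCast, ← zpow_mul, ← zpow_mul, mul_comm]
    have hA1 : recipPoch (s ^ 2) (N + n) = (1 - (s ^ N) ^ 2 * s ^ 2 * (s ^ n) ^ 2) * A := by
      have := recipPoch_sub_one hQ0 hQ1 (N + 1 + n)
      rw [show (N : ℤ) + 1 + n - 1 = N + n by ring, zpow_add₀ hQ0.ne', zpow_add_one₀ hQ0.ne',
        hN, hn] at this
      exact this
    have hA2 : recipPoch (s ^ 2) (N + (n - 1)) =
        (1 - (s ^ N) ^ 2 * (s ^ n) ^ 2) * recipPoch (s ^ 2) (N + n) := by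
      have := recipPoch_sub_one hQ0 hQ1 (N + n)
      rw [show (N : ℤ) + n - 1 = N + (n - 1) by ring, zpow_add₀ hQ0.ne', hN, hn] at this
      exact this
    have hB1 : recipPoch (s ^ 2) (N - n) = (1 - (s ^ N) ^ 2 * s ^ 2 / (s ^ n) ^ 2) * B := by
      have := recipPoch_sub_one hQ0 hQ1 (N + 1 - n)
      rw [show (N : ℤ) + 1 - n - 1 = N - n by ring, zpow_sub₀ hQ0.ne', zpow_add_one₀ hQ0.ne',
        hN, hn] at this
      exact this
    have hB2 : recipPoch (s ^ 2) (N - (n + 1)) =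
        (1 - (s ^ N) ^ 2 / (s ^ n) ^ 2) * recipPoch (s ^ 2) (N - n) := by
      have := recipPoch_sub_one hQ0 hQ1 (N - n)
      rw [show (N : ℤ) - n - 1 = N - (n + 1) by ring, zpow_sub₀ hQ0.ne', hN, hn] at this
      exact this
    have hA3 : recipPoch (s ^ 2) (N + (n + 1)) = A := by rw [hA]; congr 1; ring
    have hB3 : recipPoch (s ^ 2) (N - (n - 1)) = B := by rw [hB]; congr 1; ring
    have hs' := hs0.ne'
    have hy : s ^ n ≠ 0 := zpow_ne_zero _ hs'
    have hp : s ^ ((n + 1) ^ 2) = s ^ (n ^ 2) * (s ^ n) ^ 2 * s := by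
      rw [show (n + 1) ^ 2 = n ^ 2 + n + n + 1 by ring, zpow_add_one₀ hs', zpow_add₀ hs',
        zpow_add₀ hs']; ring
    have hm : s ^ ((n - 1) ^ 2) = s ^ (n ^ 2) / (s ^ n) ^ 2 * s := by
      rw [show (n - 1) ^ 2 = n ^ 2 - n - n + 1 by ring, zpow_add_one₀ hs', zpow_sub₀ hs',
        zpow_sub₀ hs']; field_simp
    have hw : s ^ (2 * (2 * N)) = (s ^ N) ^ 4 := by rw [← pow_mul]; congr 1; ring
    rw [hA2, hB2, hA1, hB1, hA3, hB3, hp, hm, zpow_sub_one₀ hz, zpow_add_one₀ hz,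
      show 2 * (N + 1) = 2 * N + 1 + 1 by ring, Finset.prod_range_succ, Finset.prod_range_succ,
      ← pow_mul, ← pow_mul, mul_add 2 (2 * N), pow_add, hw]
    push_cast
    rw [← hA, ← hB]
    generalize s ^ n = y at *
    generalize s ^ N = w at *
    field_simp
    ring

lemma summable_norm_thetaSeries {s z : ℝ} (hs0 : 0 < s) (hs1 : s < 1) (hz : z ≠ 0) :
    Summable fun n : ℤ => ‖z ^ n * s ^ (n ^ 2)‖ := by
  have key : ∀ w : ℝ, w ≠ 0 → Summable fun n : ℕ => ‖w ^ n * s ^ (n ^ 2)‖ := by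
    intro w hw
    refine (summable_of_ratio_test_tendsto_lt_one (l := 0) one_pos
      (Eventually.of_forall fun n => by positivity) ?_).norm
    have h : Tendsto (fun n : ℕ => ‖w‖ * s * (s ^ 2) ^ n) atTop (𝓝 (‖w‖ * s * 0)) :=
      (tendsto_pow_atTop_nhds_zero_of_lt_one (by positivity)
        (pow_lt_one₀ hs0.le hs1 two_ne_zero)).const_mul _
    rw [mul_zero] at h
    refine h.congr fun n => ?_
    rw [norm_mul, norm_mul, norm_pow, norm_pow, norm_pow, norm_pow, Real.norm_of_nonneg hs0.le]
    have : ‖w‖ ≠ 0 := norm_ne_zero_iff.2 hw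
    field_simp
    ring
  refine Summable.of_nat_of_neg ?_ ?_
  · exact_mod_cast key z hz
  · have := key z⁻¹ (inv_ne_zero hz)
    refine this.congr fun n => ?_
    rw [neg_sq, zpow_neg, zpow_natCast, inv_pow]
    norm_cast

/-- The Jacobi triple product identity. -/
theorem thetaSeries_eq_triple_product {s z : ℝ} (hs0 : 0 < s) (hs1 : s < 1) (hz : z ≠ 0) :
    thetaSeries z s =
      qPoch (s ^ 2) (s ^ 2) * (qPoch (-(z * s)) (s ^ 2) * qPoch (-(z⁻¹ * s)) (s ^ 2)) := by
  have hQ0 : 0 ≤ s ^ 2 := by positivity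
  have hQ1 : s ^ 2 < 1 := pow_lt_one₀ hs0.le hs1 two_ne_zero
  set E := qPoch (s ^ 2) (s ^ 2) with hE
  have hEpos : 0 < E := qPoch_self_pos hQ0 hQ1
  have hprod := (tendsto_qPoch (-(z * s)) hQ0 hQ1).mul (tendsto_qPoch (-(z⁻¹ * s)) hQ0 hQ1)
  simp only [← Finset.prod_mul_distrib] at hprod
  have hsum := tendsto_tsum_of_dominated_convergence (𝓕 := atTop)
    (f := fun (N : ℕ) (n : ℤ) => (∏ k ∈ Finset.range (2 * N), (1 - s ^ 2 * (s ^ 2) ^ k)) *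
        recipPoch (s ^ 2) (N + n) * recipPoch (s ^ 2) (N - n) * (z ^ n * s ^ (n ^ 2)))
    (g := fun n : ℤ => E * E⁻¹ * E⁻¹ * (z ^ n * s ^ (n ^ 2)))
    (bound := fun n : ℤ => 1 * E⁻¹ * E⁻¹ * ‖z ^ n * s ^ (n ^ 2)‖)
    ((summable_norm_thetaSeries hs0 hs1 hz).mul_left _)
    (fun n => by
      have h2 : Tendsto (fun N : ℕ => 2 * N) atTop atTop :=
        tendsto_id.const_mul_atTop' two_pos
      have ha : Tendsto (fun N : ℕ => (N : ℤ) + n) atTop atTop :=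
        tendsto_atTop_add_const_right _ _ tendsto_natCast_atTop_atTop
      have hb : Tendsto (fun N : ℕ => (N : ℤ) - n) atTop atTop :=
        tendsto_atTop_add_const_right _ (-n) tendsto_natCast_atTop_atTop
      exact ((((tendsto_qPoch _ hQ0 hQ1).comp h2).mul ((tendsto_recipPoch hQ0 hQ1).comp ha)).mul
        ((tendsto_recipPoch hQ0 hQ1).comp hb)).mul_const _)
    (Eventually.of_forall fun N n => by
      have h0 := (prod_one_sub_pos hQ0 hQ1 (2 * N)).le
      have h1 : ∏ k ∈ Finset.range (2 * N), (1 - s ^ 2 * (s ^ 2) ^ k) ≤ 1 := by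
        simpa using antitone_prod_one_sub hQ0 hQ1 (Nat.zero_le (2 * N))
      have h2 := recipPoch_nonneg hQ0 hQ1
      have h3 := recipPoch_le hQ0 hQ1
      rw [norm_mul, Real.norm_of_nonneg (mul_nonneg (mul_nonneg h0 (h2 _)) (h2 _))]
      have := h2 (N + n)
      have := h2 (N - n)
      gcongr
      · exact h3 _
      · exact h3 _)
  simp only [(hasSum_finite_triple_product hs0 hs1 hz _).tsum_eq, tsum_mul_left] at hsum
  have := tendsto_nhds_unique hsum hprod
  rw [← this, ← thetaSeries]
  field_simp

end TripleProduct

section Lattice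

lemma thetaSeries_shift {s z : ℝ} (hs0 : 0 < s) (hz : z ≠ 0) :
    thetaSeries z s = z * s * thetaSeries (z * s ^ 2) s := by
  rw [thetaSeries, thetaSeries, ← (Equiv.addRight (1 : ℤ)).tsum_eq, ← tsum_mul_left]
  refine tsum_congr fun n => ?_
  have hs' := hs0.ne'
  rw [Equiv.coe_addRight, show (n + 1) ^ 2 = n ^ 2 + (n + n) + 1 by ring, zpow_add_one₀ hs',
    zpow_add₀ hs', zpow_add_one₀ hz, mul_zpow, zpow_add₀ hs', sq s, mul_zpow]
  ring

lemma thetaSeries_inv (z s : ℝ) : thetaSeries z⁻¹ s = thetaSeries z s := by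
  rw [thetaSeries, thetaSeries, ← (Equiv.neg ℤ).tsum_eq]
  exact tsum_congr fun n => by simp

/-- The partition of `ℤ²` into the five cosets of the sublattice spanned by `(1, 2)` and
`(2, -1)`. -/
def latticeEquiv : Fin 5 × (ℤ × ℤ) ≃ ℤ × ℤ where
  toFun x := (x.1 + x.2.1 + 2 * x.2.2, 2 * x.2.1 - x.2.2)
  invFun y := (⟨((y.1 + 2 * y.2) % 5).toNat, by omega⟩,
    ((y.1 + 2 * y.2) / 5, 2 * ((y.1 + 2 * y.2) / 5) - y.2))
  left_inv := by
    rintro ⟨⟨r, hr⟩, u, v⟩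
    simp only [Prod.mk.injEq, Fin.mk.injEq]
    omega
  right_inv := by
    rintro ⟨m, n⟩
    simp only [Prod.mk.injEq]
    omega

lemma thetaSeries_mul_eq_sum {s x y : ℝ} (hs0 : 0 < s) (hs1 : s < 1) (hx : x ≠ 0) (hy : y ≠ 0) :
    thetaSeries x s * thetaSeries y s = ∑ r : Fin 5, x ^ (r : ℕ) * s ^ ((r : ℕ) ^ 2) *
      (thetaSeries (x * y ^ 2 * s ^ (2 * (r : ℕ))) (s ^ 5) *
        thetaSeries (x ^ 2 * y⁻¹ * s ^ (4 * (r : ℕ))) (s ^ 5)) := by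
  have hs' := hs0.ne'
  have h50 : 0 < s ^ 5 := by positivity
  have h51 : s ^ 5 < 1 := pow_lt_one₀ hs0.le hs1 (by norm_num)
  have hxs := summable_norm_thetaSeries hs0 hs1 hx
  have hys := summable_norm_thetaSeries hs0 hs1 hy
  have hsum : Summable fun c => x ^ (latticeEquiv c).1 * s ^ ((latticeEquiv c).1 ^ 2) *
      (y ^ (latticeEquiv c).2 * s ^ ((latticeEquiv c).2 ^ 2)) :=
    latticeEquiv.summable_iff.2 (summable_mul_of_summable_norm hxs hys)
  unfold thetaSeries
  rw [tsum_mul_tsum_of_summable_norm hxs hys, ← latticeEquiv.tsum_eq,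
    hsum.tsum_prod, tsum_fintype]
  refine Finset.sum_congr rfl fun r _ => ?_
  rw [tsum_mul_tsum_of_summable_norm (summable_norm_thetaSeries h50 h51 (by positivity))
    (summable_norm_thetaSeries h50 h51 (by positivity)), ← tsum_mul_left]
  refine tsum_congr fun ⟨u, v⟩ => ?_
  have hxpow : x ^ (((r : ℕ) : ℤ) + u + 2 * v) = x ^ (r : ℕ) * x ^ u * (x ^ v) ^ 2 := by
    rw [zpow_add₀ hx, zpow_add₀ hx, zpow_natCast, two_mul, zpow_add₀ hx, sq]
  have hypow : y ^ (2 * u - v) = (y ^ u) ^ 2 * (y ^ v)⁻¹ := by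
    rw [zpow_sub₀ hy, two_mul, zpow_add₀ hy, sq, div_eq_mul_inv]
  have hspow : s ^ ((((r : ℕ) : ℤ) + u + 2 * v) ^ 2) * s ^ ((2 * u - v) ^ 2) =
      s ^ ((r : ℕ) ^ 2) * (s ^ (2 * (r : ℕ))) ^ u * (s ^ (4 * (r : ℕ))) ^ v *
        (s ^ 5) ^ (u ^ 2) * (s ^ 5) ^ (v ^ 2) := by
    simp only [← zpow_natCast, ← zpow_mul]
    simp only [← zpow_add₀ hs']
    congr 1
    push_cast
    ring
  have hy2 : (y ^ 2) ^ u = (y ^ u) ^ 2 := by rw [sq, mul_zpow, sq]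
  have hx2 : (x ^ 2) ^ v = (x ^ v) ^ 2 := by rw [sq, mul_zpow, sq]
  simp only [latticeEquiv, Equiv.coe_fn_mk]
  rw [hxpow, hypow, mul_zpow, mul_zpow, mul_zpow, mul_zpow, hy2, hx2, inv_zpow]
  linear_combination (x ^ (r : ℕ) * x ^ u * (x ^ v) ^ 2 * (y ^ u) ^ 2 * (y ^ v)⁻¹) * hspow

end Lattice

section Evaluations

variable {q : ℝ}

lemma qPoch_odd_mul (hq0 : 0 < q) (hq1 : q < 1) :
    qPoch q (q ^ 2) * qPoch (q ^ 2) (q ^ 2) = qPoch q q := by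
  rw [qPoch_dissection q hq0.le hq1 two_ne_zero]
  simp [Finset.prod_range_succ, sq]

lemma qPoch_neg_mul (hq0 : 0 < q) (hq1 : q < 1) :
    qPoch (-q) q * qPoch q q = qPoch (q ^ 2) (q ^ 2) := by
  rw [mul_comm, qPoch_mul_qPoch_neg q hq0.le hq1]

lemma neg_one_zpow_sq (n : ℤ) : (-1 : ℝ) ^ (n ^ 2) = (-1) ^ n := by
  rcases Int.even_or_odd n with h | h
  · rw [h.neg_one_zpow, (h.pow_of_ne_zero two_ne_zero).neg_one_zpow]
  · rw [h.neg_one_zpow, h.pow.neg_one_zpow]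

lemma phi_neg_eq_thetaSeries (q : ℝ) : phi (-q) = thetaSeries (-1) q := by
  refine tsum_congr fun n => ?_
  rw [neg_eq_neg_one_mul, mul_zpow, neg_one_zpow_sq]

/-- The product evaluation `φ(-q) = (q; q)_∞ ^ 2 / (q ^ 2; q ^ 2)_∞`. -/
lemma phi_neg_mul (hq0 : 0 < q) (hq1 : q < 1) :
    phi (-q) * qPoch (q ^ 2) (q ^ 2) = qPoch q q ^ 2 := by
  rw [phi_neg_eq_thetaSeries, thetaSeries_eq_triple_product hq0 hq1 (by norm_num),
    ← qPoch_odd_mul hq0 hq1]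
  norm_num
  ring

/-- Euler's pentagonal number theorem. -/
lemma fneg_eq_qPoch (hq0 : 0 < q) (hq1 : q < 1) : fneg q = qPoch q q := by
  obtain ⟨p, hp0, rfl⟩ : ∃ p : ℝ, 0 < p ∧ q = p ^ 2 :=
    ⟨√q, Real.sqrt_pos.2 hq0, (Real.sq_sqrt hq0.le).symm⟩
  have hp1 : p < 1 := by nlinarith
  have hp := hp0.ne'
  have h1 : fneg (p ^ 2) = thetaSeries (-p⁻¹) (p ^ 3) := by
    refine tsum_congr fun n => ?_
    have he : Even (n * (3 * n - 1)) := by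
      rcases Int.even_or_odd n with h | h
      · exact h.mul_right _
      · refine Even.mul_left ?_ n
        obtain ⟨k, rfl⟩ := h
        exact ⟨3 * k + 1, by ring⟩
    have h2 := Int.two_mul_ediv_two_of_even he
    rw [neg_eq_neg_one_mul p⁻¹, mul_zpow, mul_assoc, inv_zpow', ← zpow_natCast, ← zpow_natCast,
      ← zpow_mul, ← zpow_mul, ← zpow_add₀ hp]
    congr 2
    push_cast
    rw [h2]
    ring
  have hp3 : p ^ 3 < 1 := pow_lt_one₀ hp0.le hp1 (by norm_num)
  rw [h1, thetaSeries_eq_triple_product (pow_pos hp0 3) hp3 (by simpa using hp),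
    qPoch_dissection (p ^ 2) (sq_nonneg p) hq1 (m := 3) (by norm_num)]
  simp only [Finset.prod_range_succ, Finset.prod_range_zero, one_mul]
  rw [show -(-p⁻¹ * p ^ 3) = p ^ 2 * (p ^ 2) ^ 0 by field_simp,
    show -((-p⁻¹)⁻¹ * p ^ 3) = p ^ 2 * (p ^ 2) ^ 1 by field_simp,
    show (p ^ 3) ^ 2 = p ^ 2 * (p ^ 2) ^ 2 by ring,
    show (p ^ 2) ^ 3 = p ^ 2 * (p ^ 2) ^ 2 by ring]
  ring

/-- The product evaluation of `2 ψ(p ^ 2)`. -/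
lemma thetaSeries_self_mul {p : ℝ} (hp0 : 0 < p) (hp1 : p < 1) :
    thetaSeries p p * qPoch (p ^ 2) (p ^ 2) = 2 * qPoch (p ^ 4) (p ^ 4) ^ 2 := by
  have hq0 : 0 < p ^ 2 := by positivity
  have hq1 : p ^ 2 < 1 := pow_lt_one₀ hp0.le hp1 two_ne_zero
  have h := qPoch_neg_mul hq0 hq1
  have h1 := qPoch_eq_mul_shift (-1) hq0.le hq1
  rw [neg_one_mul] at h1
  rw [thetaSeries_eq_triple_product hp0 hp1 hp0.ne', inv_mul_cancel₀ hp0.ne', h1, ← sq,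
    show p ^ 4 = (p ^ 2) ^ 2 by ring, ← h]
  ring

lemma thetaSeries_quintic_odd (hq0 : 0 < q) (hq1 : q < 1) :
    thetaSeries (-q ^ 2) (q ^ 5) * thetaSeries (-q ^ 4) (q ^ 5) * qPoch (q ^ 5) (q ^ 10) =
      qPoch (q ^ 10) (q ^ 10) ^ 2 * qPoch q (q ^ 2) := by
  have hq := hq0.ne'
  have h5 : q ^ 5 < 1 := pow_lt_one₀ hq0.le hq1 (by norm_num)
  have h2 : q ^ 2 < 1 := pow_lt_one₀ hq0.le hq1 (by norm_num)
  rw [thetaSeries_eq_triple_product (pow_pos hq0 5) h5 (by simpa using hq),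
    thetaSeries_eq_triple_product (pow_pos hq0 5) h5 (by simpa using hq),
    qPoch_dissection q (sq_nonneg q) h2 (m := 5) (by norm_num)]
  simp only [Finset.prod_range_succ, Finset.prod_range_zero, one_mul]
  rw [show -(-q ^ 2 * q ^ 5) = q ^ 7 by ring, show -((-q ^ 2)⁻¹ * q ^ 5) = q ^ 3 by field_simp,
    show -(-q ^ 4 * q ^ 5) = q ^ 9 by ring, show -((-q ^ 4)⁻¹ * q ^ 5) = q by field_simp]
  ring_nf

lemma thetaSeries_quintic_neg {p : ℝ} (hp0 : 0 < p) (hp1 : p < 1) :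
    thetaSeries (p ^ 3) (p ^ 5) * thetaSeries p (p ^ 5) * qPoch (-p ^ 10) (p ^ 10) =
      qPoch (p ^ 10) (p ^ 10) ^ 2 * qPoch (-p ^ 2) (p ^ 2) := by
  have hp := hp0.ne'
  have h5 : p ^ 5 < 1 := pow_lt_one₀ hp0.le hp1 (by norm_num)
  have h2 : p ^ 2 < 1 := pow_lt_one₀ hp0.le hp1 (by norm_num)
  rw [thetaSeries_eq_triple_product (pow_pos hp0 5) h5 (by positivity),
    thetaSeries_eq_triple_product (pow_pos hp0 5) h5 (by positivity),
    qPoch_dissection (-p ^ 2) (sq_nonneg p) h2 (m := 5) (by norm_num)]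
  simp only [Finset.prod_range_succ, Finset.prod_range_zero, one_mul]
  rw [show -(p ^ 3 * p ^ 5) = -p ^ 8 by ring, show -((p ^ 3)⁻¹ * p ^ 5) = -p ^ 2 by field_simp,
    show -(p * p ^ 5) = -p ^ 6 by ring, show -(p⁻¹ * p ^ 5) = -p ^ 4 by field_simp]
  ring_nf

/-- The quintic identity `φ(-q)² = φ(-q⁵)² - 4 q f(-q³, -q⁷) f(-q, -q⁹)`. -/
lemma phi_neg_sq_eq (hq0 : 0 < q) (hq1 : q < 1) :
    phi (-q) ^ 2 = phi (-(q ^ 5)) ^ 2 -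
      4 * q * (thetaSeries (-q ^ 2) (q ^ 5) * thetaSeries (-q ^ 4) (q ^ 5)) := by
  have hq := hq0.ne'
  have h50 : 0 < q ^ 5 := by positivity
  have e0 : thetaSeries (-q ^ 6) (q ^ 5) = -q⁻¹ * thetaSeries (-q ^ 4) (q ^ 5) := by
    rw [← thetaSeries_inv (-q ^ 4), thetaSeries_shift (z := (-q ^ 4)⁻¹) h50 (by simpa using hq),
      show (-q ^ 4)⁻¹ * (q ^ 5) ^ 2 = -q ^ 6 by field_simp]
    field_simp
  have e1 : thetaSeries (-q ^ 8) (q ^ 5) = -(q ^ 3)⁻¹ * thetaSeries (-q ^ 2) (q ^ 5) := by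
    rw [← thetaSeries_inv (-q ^ 2), thetaSeries_shift (z := (-q ^ 2)⁻¹) h50 (by simpa using hq),
      show (-q ^ 2)⁻¹ * (q ^ 5) ^ 2 = -q ^ 8 by field_simp]
    field_simp
  have e2 : thetaSeries (-q ^ 12) (q ^ 5) = -(q ^ 7)⁻¹ * thetaSeries (-q ^ 2) (q ^ 5) := by
    rw [thetaSeries_shift (z := -q ^ 2) h50 (by simpa using hq),
      show -q ^ 2 * (q ^ 5) ^ 2 = -q ^ 12 by ring]
    field_simp
  have e3 : thetaSeries (-q ^ 16) (q ^ 5) = -(q ^ 11)⁻¹ * thetaSeries (-q ^ 6) (q ^ 5) := by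
    rw [thetaSeries_shift (z := -q ^ 6) h50 (by simpa using hq),
      show -q ^ 6 * (q ^ 5) ^ 2 = -q ^ 16 by ring]
    field_simp
  have key := thetaSeries_mul_eq_sum (x := -1) (y := -1) hq0 hq1 (by norm_num) (by norm_num)
  rw [phi_neg_eq_thetaSeries, phi_neg_eq_thetaSeries, sq, key]
  norm_num [Fin.sum_univ_succ, e0, e1, e2, e3]
  field_simp
  ring

/-- The quintic identity `ψ(q)² = q ψ(q⁵)² + f(q, q⁴) f(q², q³)`, with `q = p²`. -/
lemma thetaSeries_self_sq_eq {p : ℝ} (hp0 : 0 < p) (hp1 : p < 1) :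
    thetaSeries p p ^ 2 = p ^ 2 * thetaSeries (p ^ 5) (p ^ 5) ^ 2 +
      4 * (thetaSeries (p ^ 3) (p ^ 5) * thetaSeries p (p ^ 5)) := by
  have hp := hp0.ne'
  have h50 : 0 < p ^ 5 := by positivity
  have e0 : thetaSeries (p ^ 7) (p ^ 5) = (p ^ 2)⁻¹ * thetaSeries (p ^ 3) (p ^ 5) := by
    rw [← thetaSeries_inv (p ^ 3), thetaSeries_shift (z := (p ^ 3)⁻¹) h50 (by positivity),
      show (p ^ 3)⁻¹ * (p ^ 5) ^ 2 = p ^ 7 by field_simp]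
    field_simp
  have e1 : thetaSeries (p ^ 9) (p ^ 5) = (p ^ 4)⁻¹ * thetaSeries p (p ^ 5) := by
    rw [← thetaSeries_inv p, thetaSeries_shift (z := p⁻¹) h50 (by positivity),
      show p⁻¹ * (p ^ 5) ^ 2 = p ^ 9 by field_simp]
    field_simp
  have e2 : thetaSeries (p ^ 11) (p ^ 5) = (p ^ 6)⁻¹ * thetaSeries p (p ^ 5) := by
    rw [thetaSeries_shift (z := p) h50 (by positivity), show p * (p ^ 5) ^ 2 = p ^ 11 by ring]
    field_simp
  have e3 : thetaSeries (p ^ 13) (p ^ 5) = (p ^ 8)⁻¹ * thetaSeries (p ^ 3) (p ^ 5) := by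
    rw [thetaSeries_shift (z := p ^ 3) h50 (by positivity),
      show p ^ 3 * (p ^ 5) ^ 2 = p ^ 13 by ring]
    field_simp
  have e4 : thetaSeries (p ^ 17) (p ^ 5) = (p ^ 12)⁻¹ * thetaSeries (p ^ 7) (p ^ 5) := by
    rw [thetaSeries_shift (z := p ^ 7) h50 (by positivity),
      show p ^ 7 * (p ^ 5) ^ 2 = p ^ 17 by ring]
    field_simp
  have key := thetaSeries_mul_eq_sum hp0 hp1 hp hp
  have hx : ∀ n : ℕ, p * p ^ 2 * p ^ n = p ^ (n + 3) := fun n => by ring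
  have hy : ∀ n : ℕ, p ^ 2 * p⁻¹ * p ^ n = p ^ (n + 1) := fun n => by field_simp; ring
  simp only [hx, hy] at key
  rw [sq, key]
  norm_num [Fin.sum_univ_succ, e0, e1, e2, e3, e4]
  field_simp
  ring

end Evaluations

section EtaIdentities

variable {q : ℝ}

lemma eta_identity_phi (hq0 : 0 < q) (hq1 : q < 1) :
    qPoch (q ^ 5) (q ^ 5) ^ 5 * qPoch (q ^ 2) (q ^ 2) ^ 2 -
        qPoch q q ^ 4 * qPoch (q ^ 10) (q ^ 10) ^ 2 * qPoch (q ^ 5) (q ^ 5) =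
      4 * q * qPoch q q * qPoch (q ^ 10) (q ^ 10) ^ 5 * qPoch (q ^ 2) (q ^ 2) := by
  have h50 : 0 < q ^ 5 := by positivity
  have h51 : q ^ 5 < 1 := pow_lt_one₀ hq0.le hq1 (by norm_num)
  have h10 : (q ^ 5) ^ 2 = q ^ 10 := by ring
  have a1 := phi_neg_mul hq0 hq1
  have a5 := phi_neg_mul h50 h51
  have o1 := qPoch_odd_mul hq0 hq1
  have o5 := qPoch_odd_mul h50 h51
  have hT := thetaSeries_quintic_odd hq0 hq1
  have hA := phi_neg_sq_eq hq0 hq1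
  rw [h10] at a5 o5
  generalize thetaSeries (-q ^ 2) (q ^ 5) * thetaSeries (-q ^ 4) (q ^ 5) = T at *
  generalize qPoch q (q ^ 2) = O1 at *
  generalize qPoch (q ^ 5) (q ^ 10) = O5 at *
  generalize qPoch (q ^ 10) (q ^ 10) = E10 at *
  generalize qPoch (q ^ 2) (q ^ 2) = E2 at *
  generalize phi (-q) = P1 at *
  generalize phi (-(q ^ 5)) = P5 at *
  calc qPoch (q ^ 5) (q ^ 5) ^ 5 * E2 ^ 2 - qPoch q q ^ 4 * E10 ^ 2 * qPoch (q ^ 5) (q ^ 5)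
      = (qPoch (q ^ 5) (q ^ 5) ^ 2) ^ 2 * E2 ^ 2 * qPoch (q ^ 5) (q ^ 5) -
          (qPoch q q ^ 2) ^ 2 * E10 ^ 2 * qPoch (q ^ 5) (q ^ 5) := by ring
    _ = (P5 ^ 2 - P1 ^ 2) * E10 ^ 2 * E2 ^ 2 * (O5 * E10) := by rw [← a1, ← a5, o5]; ring
    _ = 4 * q * (T * O5) * E10 ^ 3 * E2 ^ 2 := by rw [hA]; ring
    _ = 4 * q * qPoch q q * E10 ^ 5 * E2 := by rw [hT, ← o1]; ring

lemma eta_identity_psi (hq0 : 0 < q) (hq1 : q < 1) :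
    qPoch (q ^ 2) (q ^ 2) ^ 4 * qPoch (q ^ 5) (q ^ 5) ^ 2 * qPoch (q ^ 10) (q ^ 10) -
        q * qPoch (q ^ 10) (q ^ 10) ^ 5 * qPoch q q ^ 2 =
      qPoch (q ^ 2) (q ^ 2) * qPoch (q ^ 5) (q ^ 5) ^ 5 * qPoch q q := by
  obtain ⟨p, hp0, rfl⟩ : ∃ p : ℝ, 0 < p ∧ q = p ^ 2 :=
    ⟨√q, Real.sqrt_pos.2 hq0, (Real.sq_sqrt hq0.le).symm⟩
  have hp1 : p < 1 := by nlinarith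
  have h50 : 0 < p ^ 5 := by positivity
  have h51 : p ^ 5 < 1 := pow_lt_one₀ hp0.le hp1 (by norm_num)
  have h101 : p ^ 10 < 1 := pow_lt_one₀ hp0.le hp1 (by norm_num)
  have a1 := thetaSeries_self_mul hp0 hp1
  have a5 := thetaSeries_self_mul h50 h51
  have o1 := qPoch_neg_mul hq0 hq1
  have o5 := qPoch_neg_mul (pow_pos hp0 10) h101
  have hT := thetaSeries_quintic_neg hp0 hp1
  have hA := thetaSeries_self_sq_eq hp0 hp1
  simp only [← pow_mul, Nat.reduceMul] at a1 a5 o1 o5 hT hA ⊢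
  generalize thetaSeries (p ^ 3) (p ^ 5) * thetaSeries p (p ^ 5) = T at *
  generalize qPoch (-p ^ 2) (p ^ 2) = O1 at *
  generalize qPoch (-p ^ 10) (p ^ 10) = O5 at *
  generalize qPoch (p ^ 20) (p ^ 20) = E10 at *
  generalize qPoch (p ^ 4) (p ^ 4) = E2 at *
  generalize qPoch (p ^ 2) (p ^ 2) = E1 at *
  generalize qPoch (p ^ 10) (p ^ 10) = E5 at *
  generalize thetaSeries p p = P1 at *
  generalize thetaSeries (p ^ 5) (p ^ 5) = P5 at *
  have h4 : 4 * (E2 ^ 4 * E5 ^ 2 * E10 - p ^ 2 * E10 ^ 5 * E1 ^ 2) = 4 * (E2 * E5 ^ 5 * E1) :=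
    calc 4 * (E2 ^ 4 * E5 ^ 2 * E10 - p ^ 2 * E10 ^ 5 * E1 ^ 2)
        = (2 * E2 ^ 2) ^ 2 * E5 ^ 2 * E10 - p ^ 2 * (2 * E10 ^ 2) ^ 2 * E10 * E1 ^ 2 := by ring
      _ = (P1 ^ 2 - p ^ 2 * P5 ^ 2) * E1 ^ 2 * E5 ^ 2 * (O5 * E5) := by rw [← a1, ← a5, o5]; ring
      _ = 4 * (T * O5) * E1 ^ 2 * E5 ^ 3 := by rw [hA]; ring
      _ = 4 * (E2 * E5 ^ 5 * E1) := by rw [hT, ← o1]; ring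
  linarith

end EtaIdentities

theorem stmt_3 (q U : ℝ) (hq0 : 0 < q) (hq1 : q < 1)
    (hU : U = phi (-q) ^ 2 / phi (-(q ^ 5)) ^ 2) :
    q * fneg q ^ 6 * fneg (q ^ 10) ^ 6 / (fneg (q ^ 2) ^ 6 * fneg (q ^ 5) ^ 6)
      = U * (U - 1) / (U - 5) := by
  have hlt : ∀ {n : ℕ}, n ≠ 0 → q ^ n < 1 := fun hn => pow_lt_one₀ hq0.le hq1 hn
  have a1 := phi_neg_mul hq0 hq1
  have a5 := phi_neg_mul (pow_pos hq0 5) (hlt (n := 5) (by norm_num))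
  rw [show (q ^ 5) ^ 2 = q ^ 10 by ring] at a5
  have hA := eta_identity_phi hq0 hq1
  have hC := eta_identity_psi hq0 hq1
  rw [fneg_eq_qPoch hq0 hq1, fneg_eq_qPoch (pow_pos hq0 2) (hlt (by norm_num)),
    fneg_eq_qPoch (pow_pos hq0 5) (hlt (by norm_num)),
    fneg_eq_qPoch (pow_pos hq0 10) (hlt (by norm_num))]
  have p1 := qPoch_self_pos hq0.le hq1
  have p2 := qPoch_self_pos (pow_pos hq0 2).le (hlt (n := 2) (by norm_num))
  have p5 := qPoch_self_pos (pow_pos hq0 5).le (hlt (n := 5) (by norm_num))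
  have p10 := qPoch_self_pos (pow_pos hq0 10).le (hlt (n := 10) (by norm_num))
  rw [← eq_div_iff p2.ne'] at a1
  rw [← eq_div_iff p10.ne'] at a5
  rw [a1, a5] at hU
  generalize qPoch q q = e1 at *
  generalize qPoch (q ^ 2) (q ^ 2) = e2 at *
  generalize qPoch (q ^ 5) (q ^ 5) = e5 at *
  generalize qPoch (q ^ 10) (q ^ 10) = e10 at *
  have hU0 : U = e1 ^ 4 * e10 ^ 2 / (e2 ^ 2 * e5 ^ 4) := by
    rw [hU]; field_simp
  have hU1 : U - 1 = -(4 * q * e1 * e10 ^ 5 / (e2 * e5 ^ 5)) := by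
    rw [hU0]
    field_simp
    linear_combination -hA
  have hU5 : U - 5 = -(4 * e2 ^ 3 * e10 / (e1 * e5 ^ 3)) := by
    rw [hU0]
    field_simp
    refine mul_left_cancel₀ p5.ne' ?_
    linear_combination (-e1) * hA + 4 * e2 * hC
  rw [hU1, hU5, hU0]
  field_simp
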